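/- arXiv:1610.00394 — 3 statements merged into one kernel-verified Lean document; each statement's English description precedes it below -/
import Mathlib

section
/- Let (x,u) be an admissible pair with initial condition x₀, let μ(·|x,u) be its occupation measure and δ_{x(T)} its terminal measure. Then (μ(·|x,u), δ_{x(T)}) satisfies Liouville's equation: for every v ∈ C¹([0,T]×ℝⁿ), v(0,x₀) + ∫ L_F v dμ(·|x,u) = v(T,x(T)). -/
open MeasureTheory Set

noncomputable section

/-- The input constraint set `U = [-1,1]^m`. -/
def Ubox (m : ℕ) : Set (Fin m → ℝ) := Set.Icc (fun _ => (-1 : ℝ)) (fun _ => (1 : ℝ))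

/-- The controlled vector field `F(t,x,u) = f(t,x) + g(t,x) u`. -/
def Fvec {n m : ℕ} (f : ℝ × (Fin n → ℝ) → Fin n → ℝ)
    (g : ℝ × (Fin n → ℝ) → Fin n → Fin m → ℝ)
    (z : ℝ × (Fin n → ℝ) × (Fin m → ℝ)) : Fin n → ℝ :=
  fun k => f (z.1, z.2.1) k + ∑ j, g (z.1, z.2.1) k j * z.2.2 j

/-- `(L_F v)(t,x,u) = ∂v/∂t + Σ_k (∂v/∂x_k)·[F(t,x,u)]_k`. -/
def LFop {n m : ℕ} (f : ℝ × (Fin n → ℝ) → Fin n → ℝ)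
    (g : ℝ × (Fin n → ℝ) → Fin n → Fin m → ℝ)
    (v : ℝ × (Fin n → ℝ) → ℝ) (z : ℝ × (Fin n → ℝ) × (Fin m → ℝ)) : ℝ :=
  fderiv ℝ v (z.1, z.2.1) ((1 : ℝ), (0 : Fin n → ℝ)) +
    ∑ k, fderiv ℝ v (z.1, z.2.1) ((0 : ℝ), Pi.single k (1 : ℝ)) * Fvec f g z k

/-- An admissible pair: a Borel measurable control `u` with values in `U` and an
absolutely continuous trajectory `x` with `x(0) = x₀`, `x(T) ∈ X_T`, `x(t) ∈ X` on `[0,T]`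
and `ẋ = F(t,x,u)` a.e. (encoded in integral form). -/
def IsAdmissiblePair {n m : ℕ} (T : ℝ) (X XT : Set (Fin n → ℝ)) (x₀ : Fin n → ℝ)
    (f : ℝ × (Fin n → ℝ) → Fin n → ℝ) (g : ℝ × (Fin n → ℝ) → Fin n → Fin m → ℝ)
    (x : ℝ → Fin n → ℝ) (u : ℝ → Fin m → ℝ) : Prop :=
  Measurable u ∧ (∀ t ∈ Set.Icc (0 : ℝ) T, u t ∈ Ubox m) ∧
  x 0 = x₀ ∧ x T ∈ XT ∧ (∀ t ∈ Set.Icc (0 : ℝ) T, x t ∈ X) ∧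
  IntegrableOn (fun s => Fvec f g (s, x s, u s)) (Set.Icc (0 : ℝ) T) volume ∧
  ∀ t ∈ Set.Icc (0 : ℝ) T, x t = x₀ + ∫ s in Set.Icc (0 : ℝ) t, Fvec f g (s, x s, u s)

/-- The occupation measure of an admissible pair: the pushforward of Lebesgue measure
on `[0,T]` under `t ↦ (t, x(t), u(t))`. -/
def occupationMeasure {n m : ℕ} (T : ℝ) (x : ℝ → Fin n → ℝ) (u : ℝ → Fin m → ℝ) :
    Measure (ℝ × (Fin n → ℝ) × (Fin m → ℝ)) :=
  Measure.map (fun t => (t, x t, u t)) (volume.restrict (Set.Icc (0 : ℝ) T))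

lemma continuousOn_Fvec_aux {n m : ℕ} (T : ℝ)
    (f : ℝ × (Fin n → ℝ) → Fin n → ℝ) (g : ℝ × (Fin n → ℝ) → Fin n → Fin m → ℝ)
    (hf : ContinuousOn f (Set.Icc (0 : ℝ) T ×ˢ Set.univ))
    (hg : ContinuousOn g (Set.Icc (0 : ℝ) T ×ˢ Set.univ)) :
    ContinuousOn (Fvec f g) (Set.Icc (0 : ℝ) T ×ˢ Set.univ) := by
  have hp : ContinuousOn (fun z : ℝ × (Fin n → ℝ) × (Fin m → ℝ) => (z.1, z.2.1))
      (Set.Icc (0 : ℝ) T ×ˢ Set.univ) := by fun_prop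
  have hmaps : MapsTo (fun z : ℝ × (Fin n → ℝ) × (Fin m → ℝ) => (z.1, z.2.1))
      (Set.Icc (0 : ℝ) T ×ˢ Set.univ) (Set.Icc (0 : ℝ) T ×ˢ Set.univ) :=
    fun z hz => ⟨hz.1, trivial⟩
  have hf' := hf.comp hp hmaps
  have hg' := hg.comp hp hmaps
  rw [continuousOn_pi] at hf' hg' ⊢
  intro k
  refine (hf' k).add (continuousOn_finsetSum _ fun j _ => ?_)
  have h1 := (continuousOn_pi.mp (hg' k)) j
  exact h1.mul (by fun_prop)

lemma continuousOn_LFop_aux {n m : ℕ} (T : ℝ)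
    (f : ℝ × (Fin n → ℝ) → Fin n → ℝ) (g : ℝ × (Fin n → ℝ) → Fin n → Fin m → ℝ)
    (hf : ContinuousOn f (Set.Icc (0 : ℝ) T ×ˢ Set.univ))
    (hg : ContinuousOn g (Set.Icc (0 : ℝ) T ×ˢ Set.univ))
    (v : ℝ × (Fin n → ℝ) → ℝ) (hv : ContDiff ℝ 1 v) :
    ContinuousOn (LFop f g v) (Set.Icc (0 : ℝ) T ×ˢ Set.univ) := by
  have hF := continuousOn_pi.mp (continuousOn_Fvec_aux T f g hf hg)
  have hd : Continuous (fun z : ℝ × (Fin n → ℝ) × (Fin m → ℝ) => fderiv ℝ v (z.1, z.2.1)) :=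
    (hv.continuous_fderiv one_ne_zero).comp (by fun_prop)
  have hd' : ∀ w, Continuous (fun z : ℝ × (Fin n → ℝ) × (Fin m → ℝ) =>
      fderiv ℝ v (z.1, z.2.1) w) := fun w => hd.clm_apply continuous_const
  exact (hd' _).continuousOn.add
    (continuousOn_finsetSum _ fun k _ => (hd' _).continuousOn.mul (hF k))

lemma fderiv_eq_LFop_aux {n m : ℕ}
    (f : ℝ × (Fin n → ℝ) → Fin n → ℝ) (g : ℝ × (Fin n → ℝ) → Fin n → Fin m → ℝ)
    (v : ℝ × (Fin n → ℝ) → ℝ) (z : ℝ × (Fin n → ℝ) × (Fin m → ℝ)) :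
    fderiv ℝ v (z.1, z.2.1) (1, Fvec f g z) = LFop f g v z := by
  unfold LFop
  generalize Fvec f g z = y
  generalize fderiv ℝ v (z.1, z.2.1) = L
  have h : ((1 : ℝ), y) = (1, 0) + ∑ k, y k • ((0 : ℝ), (Pi.single k (1 : ℝ) : Fin n → ℝ)) := by
    have h2 : ∑ k, y k • ((0 : ℝ), (Pi.single k (1 : ℝ) : Fin n → ℝ)) = (0, y) := by
      ext i
      · simp [Prod.fst_sum]
      · simp [Prod.snd_sum, Finset.sum_apply, Pi.single_apply]
    rw [h2]; simp
  rw [h, map_add, map_sum]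
  simp only [map_smul, smul_eq_mul, mul_comm]

/-- the occupation measure and terminal measure of an admissible pair satisfy
Liouville's equation: for every `v ∈ C¹`,
`v(0,x₀) + ∫ L_F v dμ(·|x,u) = v(T, x(T)) = ∫ v(T,·) dδ_{x(T)}`. -/
theorem occupation_satisfies_liouville
    {n m : ℕ} (hn : 0 < n) (hm : 0 < m) (T : ℝ) (hT : 0 < T)
    (X XT : Set (Fin n → ℝ)) (hX : IsCompact X) (hXT : IsCompact XT) (hXTsub : XT ⊆ X)
    (x₀ : Fin n → ℝ) (hx₀ : x₀ ∈ X)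
    (f : ℝ × (Fin n → ℝ) → Fin n → ℝ) (g : ℝ × (Fin n → ℝ) → Fin n → Fin m → ℝ)
    (hf : ContinuousOn f (Set.Icc (0 : ℝ) T ×ˢ Set.univ))
    (hg : ContinuousOn g (Set.Icc (0 : ℝ) T ×ˢ Set.univ))
    (x : ℝ → Fin n → ℝ) (u : ℝ → Fin m → ℝ)
    (hadm : IsAdmissiblePair T X XT x₀ f g x u) :
    ∀ v : ℝ × (Fin n → ℝ) → ℝ, ContDiff ℝ 1 v →
      v (0, x₀) + ∫ z, LFop f g v z ∂(occupationMeasure T x u) =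
        ∫ y, v (T, y) ∂(Measure.dirac (x T)) := by
  intro v hv
  obtain ⟨hu, huU, hx0, hxT, hxX, hint, hxi⟩ := hadm
  rw [integral_dirac]
  set Φ : ℝ → Fin n → ℝ := fun s => Fvec f g (s, x s, u s) with hΦ
  have hFc := continuousOn_Fvec_aux T f g hf hg
  have hLc := continuousOn_LFop_aux T f g hf hg v hv
  -- bound on the vector field along the trajectory
  obtain ⟨C, hC⟩ : ∃ C, ∀ t ∈ Set.Icc (0 : ℝ) T, ‖Φ t‖ ≤ C := by
    have hK : IsCompact (Set.Icc (0 : ℝ) T ×ˢ (X ×ˢ Ubox m)) :=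
      isCompact_Icc.prod (hX.prod isCompact_Icc)
    obtain ⟨C, hC⟩ := hK.exists_bound_of_continuousOn
      (hFc.mono (Set.prod_mono le_rfl (subset_univ _)))
    exact ⟨C, fun t ht => hC _ ⟨ht, hxX t ht, huU t ht⟩⟩
  have hII : ∀ a ∈ Set.Icc (0 : ℝ) T, ∀ b ∈ Set.Icc (0 : ℝ) T, IntervalIntegrable Φ volume a b := by
    intro a ha b hb
    rw [intervalIntegrable_iff]
    exact hint.mono_set (uIoc_subset_uIcc.trans (uIcc_subset_Icc ha hb))
  have h0 : (0 : ℝ) ∈ Set.Icc (0 : ℝ) T := ⟨le_rfl, hT.le⟩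
  have hTm : T ∈ Set.Icc (0 : ℝ) T := ⟨hT.le, le_rfl⟩
  have hxi' : ∀ t ∈ Set.Icc (0 : ℝ) T, x t = x₀ + ∫ s in (0 : ℝ)..t, Φ s := by
    intro t ht
    rw [hxi t ht, intervalIntegral.integral_of_le ht.1, integral_Icc_eq_integral_Ioc]
  have hxL : LipschitzOnWith C.toNNReal x (Set.Icc (0 : ℝ) T) := by
    refine LipschitzOnWith.of_dist_le_mul fun a ha b hb => ?_
    have hC0 : 0 ≤ C := (norm_nonneg _).trans (hC 0 h0)
    rw [dist_eq_norm, hxi' a ha, hxi' b hb, add_sub_add_left_eq_sub,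
      intervalIntegral.integral_interval_sub_left (hII _ h0 _ ha) (hII _ h0 _ hb),
      Real.coe_toNNReal _ hC0, Real.dist_eq]
    exact intervalIntegral.norm_integral_le_of_norm_le_const fun s hs =>
      hC s ((uIoc_subset_uIcc.trans (uIcc_subset_Icc hb ha)) hs)
  obtain ⟨K, hK⟩ : ∃ K, LipschitzOnWith K v (Set.Icc (0 : ℝ) T ×ˢ X) :=
    LocallyLipschitzOn.exists_lipschitzOnWith_of_compact (isCompact_Icc.prod hX)
      hv.locallyLipschitz.locallyLipschitzOn
  have hwL := hK.comp ((LipschitzWith.id.lipschitzOnWith (s := Set.Icc (0 : ℝ) T)).prodMk hxL)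
    (fun t ht => ⟨ht, hxX t ht⟩)
  rw [← uIcc_of_le hT.le] at hwL
  have hFTC := hwL.absolutelyContinuousOnInterval.integral_deriv_eq_sub
  have hae : ∀ᵐ t, t ∈ uIoc 0 T →
      deriv (v ∘ fun t => (id t, x t)) t = LFop f g v (t, x t, u t) := by
    have hneT : ∀ᵐ t : ℝ, t ≠ T := by simp [ae_iff, measure_singleton]
    filter_upwards [(hII 0 h0 T hTm).ae_hasDerivAt_integral, hneT] with t ht htT htm
    rw [uIcc_of_le hT.le] at ht
    rw [uIoc_of_le hT.le] at htm
    have htI : t ∈ Set.Icc (0 : ℝ) T := ⟨htm.1.le, htm.2⟩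
    have hd := (ht htI 0 h0).const_add x₀
    have hxd : HasDerivAt x (Φ t) t := by
      refine hd.congr_of_eventuallyEq ?_
      filter_upwards [Icc_mem_nhds htm.1 (lt_of_le_of_ne htm.2 htT)] with s hs
      exact hxi' s hs
    have hpair : HasDerivAt (fun t => (id t, x t)) ((1 : ℝ), Φ t) t := (hasDerivAt_id t).prodMk hxd
    have hvd : HasFDerivAt v (fderiv ℝ v (t, x t)) (id t, x t) :=
      ((hv.differentiable one_ne_zero) (t, x t)).hasFDerivAt
    rw [(hvd.comp_hasDerivAt t hpair).deriv]
    exact fderiv_eq_LFop_aux f g v (t, x t, u t)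
  rw [intervalIntegral.integral_congr_ae hae, intervalIntegral.integral_of_le hT.le,
    ← integral_Icc_eq_integral_Ioc] at hFTC
  have hmeas : AEMeasurable (fun t => (t, x t, u t)) (volume.restrict (Set.Icc (0 : ℝ) T)) :=
    aemeasurable_id.prodMk
      ((hxL.continuousOn.aemeasurable measurableSet_Icc).prodMk hu.aemeasurable)
  have hS : MeasurableSet (Set.Icc (0 : ℝ) T ×ˢ (Set.univ : Set ((Fin n → ℝ) × (Fin m → ℝ)))) :=
    measurableSet_Icc.prod MeasurableSet.univ
  have hrestr : (occupationMeasure T x u).restrict (Set.Icc (0 : ℝ) T ×ˢ Set.univ) =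
      occupationMeasure T x u := by
    refine Measure.restrict_eq_self_of_ae_mem ?_
    unfold occupationMeasure
    refine (ae_map_iff hmeas hS).mpr ?_
    filter_upwards [ae_restrict_mem measurableSet_Icc] with t ht
    exact ⟨ht, trivial⟩
  have hsm : AEStronglyMeasurable (LFop f g v) (occupationMeasure T x u) := by
    rw [← hrestr]
    exact hLc.aestronglyMeasurable hS
  unfold occupationMeasure at hsm ⊢
  rw [integral_map hmeas hsm, hFTC]
  simp [hx0]


end
end

section
/- Weak duality between (P) and (D): if Γ = (μ, μ_T, γ, σ₊, σ₋, σ̂) is feasible for (P) and (v,w,p,q) is feasible for (D), then v(0,x₀) ≤ ⟨μ,h⟩ + ⟨μ_T,H⟩. Consequently the optimal value of (D) is at most the optimal value of (P). -/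
open MeasureTheory Set

noncomputable section

/-- `(L_f v)(t,x) = ∂v/∂t + Σ_k (∂v/∂x_k)·[f(t,x)]_k`. -/
def Lfop {n : ℕ} (f : ℝ × (Fin n → ℝ) → Fin n → ℝ)
    (v : ℝ × (Fin n → ℝ) → ℝ) (z : ℝ × (Fin n → ℝ)) : ℝ :=
  fderiv ℝ v z ((1 : ℝ), (0 : Fin n → ℝ)) +
    ∑ k, fderiv ℝ v z ((0 : ℝ), Pi.single k (1 : ℝ)) * f z k

/-- `[L_g v]_j(t,x) = Σ_k (∂v/∂x_k)·g_{kj}(t,x)`. -/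
def Lgop {n m : ℕ} (g : ℝ × (Fin n → ℝ) → Fin n → Fin m → ℝ)
    (v : ℝ × (Fin n → ℝ) → ℝ) (j : Fin m) (z : ℝ × (Fin n → ℝ)) : ℝ :=
  ∑ k, fderiv ℝ v z ((0 : ℝ), Pi.single k (1 : ℝ)) * g z k j

/-- Liouville's equation for a pair of measures `(μ, μT)` with initial point `x₀`. -/
def SatisfiesLiouville {n m : ℕ} (T : ℝ) (x₀ : Fin n → ℝ)
    (f : ℝ × (Fin n → ℝ) → Fin n → ℝ) (g : ℝ × (Fin n → ℝ) → Fin n → Fin m → ℝ)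
    (μ : Measure (ℝ × (Fin n → ℝ) × (Fin m → ℝ))) (μT : Measure (Fin n → ℝ)) : Prop :=
  ∀ v : ℝ × (Fin n → ℝ) → ℝ, ContDiff ℝ 1 v →
    v (0, x₀) + ∫ z, LFop f g v z ∂μ = ∫ y, v (T, y) ∂μT

/-- Feasibility for the primal problem `(P)`. -/
def PFeasible {n m : ℕ} (T : ℝ) (X XT : Set (Fin n → ℝ)) (x₀ : Fin n → ℝ)
    (f : ℝ × (Fin n → ℝ) → Fin n → ℝ) (g : ℝ × (Fin n → ℝ) → Fin n → Fin m → ℝ)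
    (μ : Measure (ℝ × (Fin n → ℝ) × (Fin m → ℝ))) (μT : Measure (Fin n → ℝ))
    (γ : Measure (ℝ × (Fin n → ℝ))) (σp σm σh : Fin m → Measure (ℝ × (Fin n → ℝ))) : Prop :=
  IsFiniteMeasure μ ∧ IsFiniteMeasure μT ∧ IsFiniteMeasure γ ∧
  (∀ j, IsFiniteMeasure (σp j) ∧ IsFiniteMeasure (σm j) ∧ IsFiniteMeasure (σh j)) ∧
  μ ((Set.Icc (0 : ℝ) T ×ˢ X ×ˢ Ubox m)ᶜ) = 0 ∧ μT (XTᶜ) = 0 ∧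
  γ ((Set.Icc (0 : ℝ) T ×ˢ X)ᶜ) = 0 ∧
  (∀ j, σp j ((Set.Icc (0 : ℝ) T ×ˢ X)ᶜ) = 0 ∧ σm j ((Set.Icc (0 : ℝ) T ×ˢ X)ᶜ) = 0 ∧
    σh j ((Set.Icc (0 : ℝ) T ×ˢ X)ᶜ) = 0) ∧
  -- (a) Liouville's equation
  SatisfiesLiouville T x₀ f g μ μT ∧
  -- (b) ∫ L_F v dμ = ∫ L_f v dγ + Σ_j ∫ [L_g v]_j d([σ₊]_j − [σ₋]_j)
  (∀ v : ℝ × (Fin n → ℝ) → ℝ, ContDiff ℝ 1 v →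
    ∫ z, LFop f g v z ∂μ =
      ∫ z, Lfop f v z ∂γ +
        ∑ j, (∫ z, Lgop g v j z ∂(σp j) - ∫ z, Lgop g v j z ∂(σm j))) ∧
  -- (c) [σ₊]_j + [σ₋]_j + [σ̂]_j = γ
  (∀ j, σp j + σm j + σh j = γ) ∧
  -- (d) γ is the (t,x)-marginal of μ
  γ = μ.map (fun z => (z.1, z.2.1))

/-- Feasibility for the dual problem `(D)`. -/
def DFeasible {n m : ℕ} (T : ℝ) (X XT : Set (Fin n → ℝ))
    (f : ℝ × (Fin n → ℝ) → Fin n → ℝ) (g : ℝ × (Fin n → ℝ) → Fin n → Fin m → ℝ)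
    (h : ℝ × (Fin n → ℝ) × (Fin m → ℝ) → ℝ) (H : (Fin n → ℝ) → ℝ)
    (v w : ℝ × (Fin n → ℝ) → ℝ) (p : Fin m → ℝ × (Fin n → ℝ) → ℝ)
    (q : ℝ × (Fin n → ℝ) → ℝ) : Prop :=
  ContDiff ℝ 1 v ∧ ContDiff ℝ 1 w ∧ (∀ j, Continuous (p j)) ∧ Continuous q ∧
  (∀ z ∈ Set.Icc (0 : ℝ) T ×ˢ X ×ˢ Ubox m,
    0 ≤ LFop f g v z + LFop f g w z + q (z.1, z.2.1) + h z) ∧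
  (∀ x ∈ XT, v (T, x) ≤ H x) ∧
  (∀ z ∈ Set.Icc (0 : ℝ) T ×ˢ X, Lfop f w z + ∑ j, p j z + q z ≤ 0) ∧
  (∀ j, ∀ z ∈ Set.Icc (0 : ℝ) T ×ˢ X, |Lgop g w j z| ≤ p j z) ∧
  (∀ j, ∀ z ∈ Set.Icc (0 : ℝ) T ×ˢ X, 0 ≤ p j z)

/-- A function continuous on a compact set carrying a finite measure is integrable. -/
theorem integrable_of_compact_carrier {E : Type*} [TopologicalSpace E] [T2Space E]
    [MeasurableSpace E] [BorelSpace E] [SecondCountableTopology E]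
    (ν : Measure E) [IsFiniteMeasure ν] (K : Set E) (hK : IsCompact K) (h0 : ν Kᶜ = 0)
    (φ : E → ℝ) (hφ : ContinuousOn φ K) : Integrable φ ν := by
  have h1 : IntegrableOn φ K ν := hφ.integrableOn_compact' hK hK.measurableSet
  have h2 : ν.restrict K = ν := Measure.restrict_eq_self_of_ae_mem (mem_ae_iff.2 h0)
  rwa [IntegrableOn, h2] at h1

theorem Lfop_continuousOn {n : ℕ} {S : Set (ℝ × (Fin n → ℝ))}
    {f : ℝ × (Fin n → ℝ) → Fin n → ℝ} (hf : ContinuousOn f S)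
    {v : ℝ × (Fin n → ℝ) → ℝ} (hv : ContDiff ℝ 1 v) : ContinuousOn (Lfop f v) S := by
  have hd : Continuous (fderiv ℝ v) := hv.continuous_fderiv (by norm_num)
  unfold Lfop
  refine ContinuousOn.add (hd.clm_apply continuous_const).continuousOn ?_
  refine continuousOn_finsetSum _ fun k _ => ?_
  exact (hd.clm_apply continuous_const).continuousOn.mul (continuousOn_pi.1 hf k)

theorem Lgop_continuousOn {n m : ℕ} {S : Set (ℝ × (Fin n → ℝ))}
    {g : ℝ × (Fin n → ℝ) → Fin n → Fin m → ℝ} (hg : ContinuousOn g S)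
    {v : ℝ × (Fin n → ℝ) → ℝ} (hv : ContDiff ℝ 1 v) (j : Fin m) :
    ContinuousOn (Lgop g v j) S := by
  have hd : Continuous (fderiv ℝ v) := hv.continuous_fderiv (by norm_num)
  unfold Lgop
  refine continuousOn_finsetSum _ fun k _ => ?_
  exact (hd.clm_apply continuous_const).continuousOn.mul
    (continuousOn_pi.1 (continuousOn_pi.1 hg k) j)

theorem LFop_eq {n m : ℕ} (f : ℝ × (Fin n → ℝ) → Fin n → ℝ)
    (g : ℝ × (Fin n → ℝ) → Fin n → Fin m → ℝ) (v : ℝ × (Fin n → ℝ) → ℝ)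
    (z : ℝ × (Fin n → ℝ) × (Fin m → ℝ)) :
    LFop f g v z = Lfop f v (z.1, z.2.1) + ∑ j, Lgop g v j (z.1, z.2.1) * z.2.2 j := by
  simp only [LFop, Lfop, Lgop, Fvec, mul_add, Finset.sum_add_distrib, Finset.mul_sum,
    Finset.sum_mul, add_assoc, mul_assoc]
  rw [Finset.sum_comm]

/-- weak duality between `(P)` and `(D)`: if `Γ` is feasible for `(P)` and
`(v,w,p,q)` is feasible for `(D)`, then `v(0,x₀) ≤ ⟨μ,h⟩ + ⟨μ_T,H⟩`. -/
theorem weak_duality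
    {n m : ℕ} (hn : 0 < n) (hm : 0 < m) (T : ℝ) (hT : 0 < T)
    (X XT : Set (Fin n → ℝ)) (hX : IsCompact X) (hXT : IsCompact XT) (hXTsub : XT ⊆ X)
    (x₀ : Fin n → ℝ) (hx₀ : x₀ ∈ X)
    (f : ℝ × (Fin n → ℝ) → Fin n → ℝ) (g : ℝ × (Fin n → ℝ) → Fin n → Fin m → ℝ)
    (hf : ContinuousOn f (Set.Icc (0 : ℝ) T ×ˢ Set.univ))
    (hg : ContinuousOn g (Set.Icc (0 : ℝ) T ×ˢ Set.univ))
    (h : ℝ × (Fin n → ℝ) × (Fin m → ℝ) → ℝ) (H : (Fin n → ℝ) → ℝ)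
    (hh : Continuous h) (hH : Continuous H)
    (μ : Measure (ℝ × (Fin n → ℝ) × (Fin m → ℝ))) (μT : Measure (Fin n → ℝ))
    (γ : Measure (ℝ × (Fin n → ℝ))) (σp σm σh : Fin m → Measure (ℝ × (Fin n → ℝ)))
    (hP : PFeasible T X XT x₀ f g μ μT γ σp σm σh)
    (v w : ℝ × (Fin n → ℝ) → ℝ) (p : Fin m → ℝ × (Fin n → ℝ) → ℝ)
    (q : ℝ × (Fin n → ℝ) → ℝ)
    (hD : DFeasible T X XT f g h H v w p q) :
    v (0, x₀) ≤ ∫ z, h z ∂μ + ∫ y, H y ∂μT := by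
  obtain ⟨hμ, hμT, hγ, hσ, hμ0, hμT0, hγ0, hσ0, hL, hb, hc, hd⟩ := hP
  obtain ⟨hv, hw, hp, hq, h1, h2, h3, h4, h5⟩ := hD
  have hK : IsCompact (Set.Icc (0 : ℝ) T ×ˢ X) := isCompact_Icc.prod hX
  have hU : IsCompact (Ubox m) := isCompact_Icc
  have hKU : IsCompact (Set.Icc (0 : ℝ) T ×ˢ X ×ˢ Ubox m) := isCompact_Icc.prod (hX.prod hU)
  have hsub : Set.Icc (0 : ℝ) T ×ˢ X ⊆ Set.Icc (0 : ℝ) T ×ˢ Set.univ :=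
    Set.prod_mono subset_rfl (subset_univ _)
  have hf' := hf.mono hsub
  have hg' := hg.mono hsub
  have hπ : Continuous (fun z : ℝ × (Fin n → ℝ) × (Fin m → ℝ) => (z.1, z.2.1)) := by fun_prop
  have hmaps : MapsTo (fun z : ℝ × (Fin n → ℝ) × (Fin m → ℝ) => (z.1, z.2.1))
      (Set.Icc (0 : ℝ) T ×ˢ X ×ˢ Ubox m) (Set.Icc (0 : ℝ) T ×ˢ X) :=
    fun z hz => ⟨hz.1, hz.2.1⟩
  have hLF : ∀ v : ℝ × (Fin n → ℝ) → ℝ, ContDiff ℝ 1 v → Integrable (LFop f g v) μ := by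
    intro v hv
    refine integrable_of_compact_carrier μ _ hKU hμ0 _ ?_
    rw [show LFop f g v = _ from funext (LFop_eq f g v)]
    refine ContinuousOn.add ((Lfop_continuousOn hf' hv).comp hπ.continuousOn hmaps) ?_
    refine continuousOn_finsetSum _ fun j _ => ?_
    refine ContinuousOn.mul ((Lgop_continuousOn hg' hv j).comp hπ.continuousOn hmaps) ?_
    exact Continuous.continuousOn (by fun_prop)
  have ihh : Integrable h μ := integrable_of_compact_carrier μ _ hKU hμ0 _ hh.continuousOn
  have iqμ : Integrable (fun z : ℝ × (Fin n → ℝ) × (Fin m → ℝ) => q (z.1, z.2.1)) μ :=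
    integrable_of_compact_carrier μ _ hKU hμ0 _ (hq.comp hπ).continuousOn
  have iq : Integrable q γ := integrable_of_compact_carrier γ _ hK hγ0 _ hq.continuousOn
  have ip : ∀ j, Integrable (p j) γ := fun j =>
    integrable_of_compact_carrier γ _ hK hγ0 _ (hp j).continuousOn
  have iLf : Integrable (Lfop f w) γ :=
    integrable_of_compact_carrier γ _ hK hγ0 _ (Lfop_continuousOn hf' hw)
  -- terminal inequality
  have hterm : ∫ y, v (T, y) ∂μT ≤ ∫ y, H y ∂μT := by
    refine integral_mono_ae ?_ ?_ ?_
    · exact integrable_of_compact_carrier μT _ hXT hμT0 _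
        (hv.continuous.comp (by fun_prop : Continuous fun y : Fin n → ℝ => (T, y))).continuousOn
    · exact integrable_of_compact_carrier μT _ hXT hμT0 _ hH.continuousOn
    · filter_upwards [mem_ae_iff.2 hμT0] with y hy using h2 y hy
  -- running inequality
  have hrun : 0 ≤ ∫ z, LFop f g v z ∂μ + ∫ z, LFop f g w z ∂μ + ∫ z, q z ∂γ
      + ∫ z, h z ∂μ := by
    have e : ∫ z, q z ∂γ = ∫ z, q (z.1, z.2.1) ∂μ := by
      rw [hd]
      exact integral_map hπ.aemeasurable hq.aestronglyMeasurable
    have i1 : Integrable (fun z => LFop f g v z + LFop f g w z) μ := (hLF v hv).add (hLF w hw)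
    have i2 : Integrable (fun z => LFop f g v z + LFop f g w z + q (z.1, z.2.1)) μ := i1.add iqμ
    rw [e, ← integral_add (hLF v hv) (hLF w hw), ← integral_add i1 iqμ, ← integral_add i2 ihh]
    refine integral_nonneg_of_ae ?_
    filter_upwards [mem_ae_iff.2 hμ0] with z hz using h1 z hz
  have hj : ∀ j, ∫ z, Lgop g w j z ∂(σp j) - ∫ z, Lgop g w j z ∂(σm j) ≤ ∫ z, p j z ∂γ := by
    intro j
    obtain ⟨f1, f2, f3⟩ := hσ j
    obtain ⟨z1, z2, z3⟩ := hσ0 j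
    have cg := Lgop_continuousOn hg' hw j
    have ip1 := integrable_of_compact_carrier (σp j) _ hK z1 _ (hp j).continuousOn
    have ip2 := integrable_of_compact_carrier (σm j) _ hK z2 _ (hp j).continuousOn
    have ip3 := integrable_of_compact_carrier (σh j) _ hK z3 _ (hp j).continuousOn
    have ig1 := integrable_of_compact_carrier (σp j) _ hK z1 _ cg
    have ig2 := integrable_of_compact_carrier (σm j) _ hK z2 _ cg
    have e : ∫ z, p j z ∂γ = ∫ z, p j z ∂(σp j) + ∫ z, p j z ∂(σm j) + ∫ z, p j z ∂(σh j) := by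
      rw [← hc j, integral_add_measure (ip1.add_measure ip2) ip3, integral_add_measure ip1 ip2]
    have l1 : ∫ z, Lgop g w j z ∂(σp j) ≤ ∫ z, p j z ∂(σp j) := by
      refine integral_mono_ae ig1 ip1 ?_
      filter_upwards [mem_ae_iff.2 z1] with z hz using (abs_le.1 (h4 j z hz)).2
    have l2 : ∫ z, -p j z ∂(σm j) ≤ ∫ z, Lgop g w j z ∂(σm j) := by
      refine integral_mono_ae ip2.neg ig2 ?_
      filter_upwards [mem_ae_iff.2 z2] with z hz using (abs_le.1 (h4 j z hz)).1
    have l3 : 0 ≤ ∫ z, p j z ∂(σh j) := by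
      refine integral_nonneg_of_ae ?_
      filter_upwards [mem_ae_iff.2 z3] with z hz using h5 j z hz
    rw [integral_neg] at l2
    linarith
  have hsum := Finset.sum_le_sum fun j (_ : j ∈ Finset.univ) => hj j
  have hneg : ∫ z, Lfop f w z ∂γ + ∑ j, ∫ z, p j z ∂γ + ∫ z, q z ∂γ ≤ 0 := by
    have is : Integrable (fun z => ∑ j, p j z) γ := integrable_finsetSum _ fun j _ => ip j
    have i1 : Integrable (fun z => Lfop f w z + ∑ j, p j z) γ := iLf.add is
    rw [← integral_finsetSum _ fun j _ => ip j, ← integral_add iLf is, ← integral_add i1 iq]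
    refine integral_nonpos_of_ae ?_
    filter_upwards [mem_ae_iff.2 hγ0] with z hz using h3 z hz
  have a := hL v hv
  have b := hb w hw
  linarith

end
end

section
/- Strong duality between (P) and (D): if (P) is feasible, then there is no duality gap, i.e. the infimum of (P) equals the supremum of (D). -/
open MeasureTheory Set

noncomputable section

/-- Riesz representation on a compact subset. -/
lemma aux_riesz {E : Type*} [TopologicalSpace E] [T2Space E] [MeasurableSpace E] [BorelSpace E]
    (K : Set E) (hK : IsCompact K) (Λ : C(K, ℝ) →ₗ[ℝ] ℝ) (hΛ : ∀ φ, 0 ≤ φ → 0 ≤ Λ φ) :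
    ∃ μ : Measure E, IsFiniteMeasure μ ∧ μ Kᶜ = 0 ∧
      ∀ (φ : E → ℝ) (hφ : ContinuousOn φ K), ∫ z, φ z ∂μ = Λ ⟨K.domRestrict φ, hφ.domRestrict⟩ := by
  have : CompactSpace K := isCompact_iff_compactSpace.mp hK
  let L : CompactlySupportedContinuousMap K ℝ →ₗ[ℝ] ℝ :=
    { toFun := fun φ => Λ φ.toContinuousMap
      map_add' := fun a b => by
        rw [← map_add]; rfl
      map_smul' := fun a b => by
        rw [← map_smul]; rfl }
  let P : PositiveLinearMap ℝ (CompactlySupportedContinuousMap K ℝ) ℝ :=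
    PositiveLinearMap.mk₀ L (fun x hx => hΛ _ (fun y => hx y))
  have hme : MeasurableEmbedding (Subtype.val : K → E) :=
    MeasurableEmbedding.subtype_coe hK.measurableSet
  refine ⟨(RealRMK.rieszMeasure P).map Subtype.val, inferInstance, ?_, ?_⟩
  · rw [hme.map_apply]
    have : (Subtype.val : K → E) ⁻¹' Kᶜ = ∅ := by ext x; simp
    rw [this]; simp
  · intro φ hφ
    rw [hme.integral_map]
    let φ' : CompactlySupportedContinuousMap K ℝ :=
      CompactlySupportedContinuousMap.continuousMapEquiv ⟨K.domRestrict φ, hφ.domRestrict⟩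
    exact RealRMK.integral_rieszMeasure P φ'

lemma aux_duality {V : Type*} [AddCommGroup V] [Module ℝ V] {K₁ K₂ : Type*} [TopologicalSpace K₁]
    [TopologicalSpace K₂] [CompactSpace K₁] [CompactSpace K₂]
    (A : V →ₗ[ℝ] C(K₁, ℝ)) (B : V →ₗ[ℝ] C(K₂, ℝ)) (l : V →ₗ[ℝ] ℝ)
    (hpos : ∀ v, 0 ≤ A v → 0 ≤ B v → 0 ≤ l v)
    (hdense : ∀ r : ℝ, ∃ v, (∀ x, r ≤ A v x) ∧ (∀ x, r ≤ B v x)) :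
    ∃ (Λ₁ : C(K₁, ℝ) →ₗ[ℝ] ℝ) (Λ₂ : C(K₂, ℝ) →ₗ[ℝ] ℝ), (∀ φ, 0 ≤ φ → 0 ≤ Λ₁ φ) ∧
      (∀ φ, 0 ≤ φ → 0 ≤ Λ₂ φ) ∧ ∀ v, Λ₁ (A v) + Λ₂ (B v) = l v := by
  let s : PointedCone ℝ (V × C(K₁, ℝ) × C(K₂, ℝ)) :=
    { carrier := {e | 0 ≤ A e.1 + e.2.1 ∧ 0 ≤ B e.1 + e.2.2}
      add_mem' := by
        rintro a b ⟨h1, h2⟩ ⟨h3, h4⟩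
        constructor
        · have := add_nonneg h1 h3
          simp only [Prod.fst_add, Prod.snd_add, map_add]
          convert this using 1; abel
        · have := add_nonneg h2 h4
          simp only [Prod.fst_add, Prod.snd_add, map_add]
          convert this using 1; abel
      zero_mem' := by simp
      smul_mem' := by
        rintro ⟨c, hc⟩ a ⟨h1, h2⟩
        constructor
        · intro x
          have := mul_nonneg hc (h1 x)
          change 0 ≤ (A (c • a.1) + c • a.2.1) x
          rw [map_smul, ← smul_add]
          exact this
        · intro x
          have := mul_nonneg hc (h2 x)
          change 0 ≤ (B (c • a.1) + c • a.2.2) x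
          rw [map_smul, ← smul_add]
          exact this }
  let F : (V × C(K₁, ℝ) × C(K₂, ℝ)) →ₗ.[ℝ] ℝ :=
    { domain := LinearMap.ker (LinearMap.snd ℝ V (C(K₁, ℝ) × C(K₂, ℝ)))
      toFun := (l ∘ₗ LinearMap.fst ℝ V (C(K₁, ℝ) × C(K₂, ℝ))).domRestrict _ }
  obtain ⟨G, hG1, hG2⟩ := riesz_extension s F (by
      rintro ⟨⟨v, a, b⟩, hx⟩ ⟨h1, h2⟩
      have hx' : (a, b) = 0 := hx
      obtain ⟨rfl, rfl⟩ := Prod.mk_eq_zero.mp hx'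
      change 0 ≤ l v
      exact hpos v (by simpa using h1) (by simpa using h2)) (by
      rintro ⟨v, a, b⟩
      obtain ⟨r1, hr1⟩ := (isCompact_range (A v + a).continuous).bddBelow
      obtain ⟨r2, hr2⟩ := (isCompact_range (B v + b).continuous).bddBelow
      obtain ⟨w, hw1, hw2⟩ := hdense (max (-r1) (-r2))
      refine ⟨⟨(w, 0, 0), by simp [F]⟩, ?_, ?_⟩
      · intro x
        have e1 := hr1 ⟨x, rfl⟩
        have e2 := (le_max_left _ _).trans (hw1 x)
        simp at e1 ⊢
        linarith
      · intro x
        have e1 := hr2 ⟨x, rfl⟩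
        have e2 := (le_max_right _ _).trans (hw2 x)
        simp at e1 ⊢
        linarith)
  refine ⟨G ∘ₗ LinearMap.inr ℝ V _ ∘ₗ LinearMap.inl ℝ _ _,
    G ∘ₗ LinearMap.inr ℝ V _ ∘ₗ LinearMap.inr ℝ _ _, ?_, ?_, ?_⟩
  · intro φ hφ
    refine hG2 _ ⟨?_, ?_⟩ <;> simpa using hφ
  · intro φ hφ
    refine hG2 _ ⟨?_, ?_⟩ <;> simpa using hφ
  · intro v
    have h1 : G (v, 0, 0) = l v := hG1 ⟨(v, 0, 0), by simp [F]⟩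
    have h2 : 0 ≤ G (-v, A v, B v) := hG2 _ ⟨by simp, by simp⟩
    have h3 : 0 ≤ G (v, -A v, -B v) := hG2 _ ⟨by simp, by simp⟩
    have e2 : ((-v, A v, B v) : V × C(K₁, ℝ) × C(K₂, ℝ)) =
        -(v, 0, 0) + ((0, A v, 0) + (0, 0, B v)) := by simp
    have e3 : ((v, -A v, -B v) : V × C(K₁, ℝ) × C(K₂, ℝ)) =
        (v, 0, 0) - ((0, A v, 0) + (0, 0, B v)) := by simp
    rw [e2, map_add, map_neg, map_add, h1] at h2
    rw [e3, map_sub, map_add, h1] at h3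
    change G (0, A v, 0) + G (0, 0, B v) = l v
    linarith

lemma aux_integrable {E : Type*} [TopologicalSpace E] [T2Space E] [MeasurableSpace E]
    [BorelSpace E]
    {K : Set E} (hK : IsCompact K) {μ : Measure E} [IsFiniteMeasure μ] (hμ : μ Kᶜ = 0)
    {φ : E → ℝ} (hφ : ContinuousOn φ K) : Integrable φ μ := by
  have : μ.restrict K = μ := Measure.restrict_eq_self_of_ae_mem (by
    rw [ae_iff]; exact hμ)
  rw [← this]
  exact hφ.integrableOn_of_subset_isCompact hK hK.measurableSet subset_rfl (measure_ne_top _ _)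

lemma aux_integral_nonneg {E : Type*} [MeasurableSpace E]
    {K : Set E} {μ : Measure E} (hμ : μ Kᶜ = 0)
    {φ : E → ℝ} (hφ : ∀ z ∈ K, 0 ≤ φ z) : 0 ≤ ∫ z, φ z ∂μ := by
  apply integral_nonneg_of_ae
  have : ∀ᵐ z ∂μ, z ∈ K := by rw [ae_iff]; exact hμ
  filter_upwards [this] with z hz using hφ z hz

section ops
variable {n m : ℕ} {T : ℝ} {X : Set (Fin n → ℝ)}
    {f : ℝ × (Fin n → ℝ) → Fin n → ℝ} {g : ℝ × (Fin n → ℝ) → Fin n → Fin m → ℝ}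

lemma aux_LF_eq (v : ℝ × (Fin n → ℝ) → ℝ) (z : ℝ × (Fin n → ℝ) × (Fin m → ℝ)) :
    LFop f g v z = Lfop f v (z.1, z.2.1) + ∑ j, Lgop g v j (z.1, z.2.1) * z.2.2 j := by
  simp only [LFop, Lfop, Lgop, Fvec, mul_add, Finset.sum_add_distrib, Finset.mul_sum,
    Finset.sum_mul, add_assoc]
  rw [Finset.sum_comm]
  simp only [mul_assoc]

lemma aux_cont_fderiv {v : ℝ × (Fin n → ℝ) → ℝ} (hv : ContDiff ℝ 1 v) (e : ℝ × (Fin n → ℝ)) :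
    Continuous fun z => fderiv ℝ v z e :=
  (hv.continuous_fderiv one_ne_zero).clm_apply continuous_const

lemma aux_cont_Lf
    (hf : ContinuousOn f (Set.Icc (0 : ℝ) T ×ˢ Set.univ))
    {v : ℝ × (Fin n → ℝ) → ℝ} (hv : ContDiff ℝ 1 v) :
    ContinuousOn (Lfop f v) (Set.Icc (0 : ℝ) T ×ˢ X) := by
  have hf' := hf.mono (prod_mono (subset_refl (Icc 0 T)) (subset_univ X))
  unfold Lfop
  refine (aux_cont_fderiv hv _).continuousOn.add (continuousOn_finsetSum _ fun k _ => ?_)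
  exact (aux_cont_fderiv hv _).continuousOn.mul (continuousOn_pi.mp hf' k)

lemma aux_cont_Lg
    (hg : ContinuousOn g (Set.Icc (0 : ℝ) T ×ˢ Set.univ))
    {v : ℝ × (Fin n → ℝ) → ℝ} (hv : ContDiff ℝ 1 v) (j : Fin m) :
    ContinuousOn (Lgop g v j) (Set.Icc (0 : ℝ) T ×ˢ X) := by
  have hg' := hg.mono (prod_mono (subset_refl (Icc 0 T)) (subset_univ X))
  unfold Lgop
  refine continuousOn_finsetSum _ fun k _ => ?_
  exact (aux_cont_fderiv hv _).continuousOn.mul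
    (continuousOn_pi.mp (continuousOn_pi.mp hg' k) j)

lemma aux_cont_proj {φ : ℝ × (Fin n → ℝ) → ℝ} (hφ : ContinuousOn φ (Set.Icc (0 : ℝ) T ×ˢ X)) :
    ContinuousOn (fun z : ℝ × (Fin n → ℝ) × (Fin m → ℝ) => φ (z.1, z.2.1))
      (Set.Icc (0 : ℝ) T ×ˢ X ×ˢ Ubox m) :=
  hφ.comp (by fun_prop) (fun _ hz => ⟨hz.1, hz.2.1⟩)

lemma aux_cont_LF
    (hf : ContinuousOn f (Set.Icc (0 : ℝ) T ×ˢ Set.univ))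
    (hg : ContinuousOn g (Set.Icc (0 : ℝ) T ×ˢ Set.univ))
    {v : ℝ × (Fin n → ℝ) → ℝ} (hv : ContDiff ℝ 1 v) :
    ContinuousOn (LFop f g v) (Set.Icc (0 : ℝ) T ×ˢ X ×ˢ Ubox m) := by
  have : LFop f g v = fun z => Lfop f v (z.1, z.2.1) + ∑ j, Lgop g v j (z.1, z.2.1) * z.2.2 j :=
    funext (aux_LF_eq v)
  rw [this]
  refine (aux_cont_proj (aux_cont_Lf hf hv)).add (continuousOn_finsetSum _ fun j _ => ?_)
  exact (aux_cont_proj (aux_cont_Lg hg hv j)).mul (by fun_prop)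

lemma aux_LF_add {v w : ℝ × (Fin n → ℝ) → ℝ} (hv : ContDiff ℝ 1 v) (hw : ContDiff ℝ 1 w)
    (z : ℝ × (Fin n → ℝ) × (Fin m → ℝ)) :
    LFop f g (v + w) z = LFop f g v z + LFop f g w z := by
  have : fderiv ℝ (v + w) (z.1, z.2.1) = fderiv ℝ v (z.1, z.2.1) + fderiv ℝ w (z.1, z.2.1) :=
    fderiv_add (hv.differentiable one_ne_zero _) (hw.differentiable one_ne_zero _)
  simp only [LFop, this, add_apply, add_mul, Finset.sum_add_distrib]
  ring

lemma aux_LF_smul {v : ℝ × (Fin n → ℝ) → ℝ} (hv : ContDiff ℝ 1 v) (c : ℝ)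
    (z : ℝ × (Fin n → ℝ) × (Fin m → ℝ)) :
    LFop f g (c • v) z = c * LFop f g v z := by
  have : fderiv ℝ (c • v) (z.1, z.2.1) = c • fderiv ℝ v (z.1, z.2.1) :=
    fderiv_const_smul (hv.differentiable one_ne_zero _) c
  simp only [LFop, this, smul_apply, smul_eq_mul, mul_add, Finset.mul_sum, mul_assoc]

lemma aux_LF_affine (a b : ℝ) (z : ℝ × (Fin n → ℝ) × (Fin m → ℝ)) :
    LFop f g (fun y => a * y.1 + b) z = a := by
  have : HasFDerivAt (fun y : ℝ × (Fin n → ℝ) => a * y.1 + b)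
      (a • ContinuousLinearMap.fst ℝ ℝ (Fin n → ℝ)) (z.1, z.2.1) :=
    ((ContinuousLinearMap.fst ℝ ℝ (Fin n → ℝ)).hasFDerivAt.const_mul a).add_const b
  simp [LFop, this.fderiv]

/-- A dual feasible point satisfies the reduced (classical) dual constraint. -/
lemma aux_D_reduce {XT : Set (Fin n → ℝ)} {h : ℝ × (Fin n → ℝ) × (Fin m → ℝ) → ℝ}
    {H : (Fin n → ℝ) → ℝ} {v w : ℝ × (Fin n → ℝ) → ℝ} {p : Fin m → ℝ × (Fin n → ℝ) → ℝ}
    {q : ℝ × (Fin n → ℝ) → ℝ} (hD : DFeasible T X XT f g h H v w p q) :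
    ∀ z ∈ Set.Icc (0 : ℝ) T ×ˢ X ×ˢ Ubox m, 0 ≤ LFop f g v z + h z := by
  obtain ⟨-, -, -, -, h1, -, h3, h4, -⟩ := hD
  intro z hz
  have hz' : (z.1, z.2.1) ∈ Set.Icc (0 : ℝ) T ×ˢ X := ⟨hz.1, hz.2.1⟩
  have e1 := h1 z hz
  have e3 := h3 _ hz'
  have e4 : ∑ j, Lgop g w j (z.1, z.2.1) * z.2.2 j ≤ ∑ j, p j (z.1, z.2.1) := by
    refine Finset.sum_le_sum fun j _ => ?_
    have hu : |z.2.2 j| ≤ 1 := abs_le.mpr ⟨hz.2.2.1 j, hz.2.2.2 j⟩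
    calc _ ≤ |Lgop g w j (z.1, z.2.1) * z.2.2 j| := le_abs_self _
      _ = |Lgop g w j (z.1, z.2.1)| * |z.2.2 j| := abs_mul _ _
      _ ≤ |Lgop g w j (z.1, z.2.1)| * 1 := by gcongr
      _ ≤ _ := by rw [mul_one]; exact h4 j _ hz'
  have e5 := aux_LF_eq (f := f) (g := g) w z
  linarith

lemma aux_weak
    (hf : ContinuousOn f (Set.Icc (0 : ℝ) T ×ˢ Set.univ))
    (hg : ContinuousOn g (Set.Icc (0 : ℝ) T ×ˢ Set.univ))
    (hX : IsCompact X) {XT : Set (Fin n → ℝ)} (hXT : IsCompact XT) {x₀ : Fin n → ℝ}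
    {h : ℝ × (Fin n → ℝ) × (Fin m → ℝ) → ℝ} {H : (Fin n → ℝ) → ℝ}
    (hh : Continuous h) (hH : Continuous H)
    {μ : Measure (ℝ × (Fin n → ℝ) × (Fin m → ℝ))} {μT : Measure (Fin n → ℝ)}
    [IsFiniteMeasure μ] [IsFiniteMeasure μT]
    (hμ : μ ((Set.Icc (0 : ℝ) T ×ˢ X ×ˢ Ubox m)ᶜ) = 0) (hμT : μT (XTᶜ) = 0)
    (hL : SatisfiesLiouville T x₀ f g μ μT) {v : ℝ × (Fin n → ℝ) → ℝ} (hv : ContDiff ℝ 1 v)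
    (c : ℝ) (h1 : ∀ z ∈ Set.Icc (0 : ℝ) T ×ˢ X ×ˢ Ubox m, 0 ≤ LFop f g v z + c * h z)
    (h2 : ∀ x ∈ XT, 0 ≤ c * H x - v (T, x)) :
    v (0, x₀) ≤ c * (∫ z, h z ∂μ + ∫ y, H y ∂μT) := by
  have hK : IsCompact (Set.Icc (0 : ℝ) T ×ˢ X ×ˢ Ubox m) :=
    isCompact_Icc.prod (hX.prod isCompact_Icc)
  have e1 := aux_integral_nonneg hμ h1
  have e2 := aux_integral_nonneg hμT h2
  rw [integral_add (aux_integrable hK hμ (aux_cont_LF hf hg hv))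
    (aux_integrable hK hμ (by fun_prop)), integral_const_mul] at e1
  have hvc := hv.continuous
  rw [integral_sub (aux_integrable hXT hμT (by fun_prop))
    (aux_integrable hXT hμT (by fun_prop)), integral_const_mul] at e2
  have e3 := hL v hv
  linarith

/-- Completing a Liouville pair to a feasible point of `(P)`. -/
lemma aux_complete
    (hf : ContinuousOn f (Set.Icc (0 : ℝ) T ×ˢ Set.univ))
    (hg : ContinuousOn g (Set.Icc (0 : ℝ) T ×ˢ Set.univ))
    (hX : IsCompact X) {XT : Set (Fin n → ℝ)} {x₀ : Fin n → ℝ}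
    {μ : Measure (ℝ × (Fin n → ℝ) × (Fin m → ℝ))} {μT : Measure (Fin n → ℝ)}
    [IsFiniteMeasure μ] [IsFiniteMeasure μT]
    (hμ : μ ((Set.Icc (0 : ℝ) T ×ˢ X ×ˢ Ubox m)ᶜ) = 0) (hμT : μT (XTᶜ) = 0)
    (hL : SatisfiesLiouville T x₀ f g μ μT) :
    ∃ (γ : Measure (ℝ × (Fin n → ℝ))) (σp σm σh : Fin m → Measure (ℝ × (Fin n → ℝ))),
      PFeasible T X XT x₀ f g μ μT γ σp σm σh := by
  have hK : IsCompact (Set.Icc (0 : ℝ) T ×ˢ X ×ˢ Ubox m) :=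
    isCompact_Icc.prod (hX.prod isCompact_Icc)
  have hK' : IsCompact (Set.Icc (0 : ℝ) T ×ˢ X) := isCompact_Icc.prod hX
  let π : ℝ × (Fin n → ℝ) × (Fin m → ℝ) → ℝ × (Fin n → ℝ) := fun z => (z.1, z.2.1)
  have hπ : Measurable π := by fun_prop
  have hmem : ∀ᵐ z ∂μ, z ∈ Set.Icc (0 : ℝ) T ×ˢ X ×ˢ Ubox m := by rw [ae_iff]; exact hμ
  -- measures with a continuous density
  let S : (ℝ × (Fin n → ℝ) × (Fin m → ℝ) → ℝ) → Measure (ℝ × (Fin n → ℝ)) :=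
    fun ρ => (μ.withDensity (fun z => ENNReal.ofReal (ρ z))).map π
  have hSfin : ∀ ρ, Continuous ρ → IsFiniteMeasure (S ρ) := by
    intro ρ hρ
    have := isFiniteMeasure_withDensity_ofReal
      (aux_integrable hK hμ hρ.continuousOn).hasFiniteIntegral
    infer_instance
  have hSsupp : ∀ ρ, S ρ ((Set.Icc (0 : ℝ) T ×ˢ X)ᶜ) = 0 := by
    intro ρ
    change ((μ.withDensity _).map π) _ = 0
    rw [Measure.map_apply hπ hK'.measurableSet.compl]
    refine withDensity_absolutelyContinuous _ _ (measure_mono_null ?_ hμ)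
    intro z hz hz2
    exact hz ⟨hz2.1, hz2.2.1⟩
  have hSint : ∀ ρ, Continuous ρ → (∀ z, 0 ≤ ρ z) → ∀ φ : ℝ × (Fin n → ℝ) → ℝ,
      ContinuousOn φ (Set.Icc (0 : ℝ) T ×ˢ X) →
      ∫ z, φ z ∂(S ρ) = ∫ z, ρ z * φ (π z) ∂μ := by
    intro ρ hρ hρ0 φ hφ
    have := hSfin ρ hρ
    rw [integral_map hπ.aemeasurable (aux_integrable hK' (hSsupp ρ) hφ).aestronglyMeasurable,
      integral_withDensity_eq_integral_toReal_smul (by fun_prop) (by simp)]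
    refine integral_congr_ae (ae_of_all _ fun z => ?_)
    simp [ENNReal.toReal_ofReal (hρ0 z)]
  have hγsupp : (μ.map π) ((Set.Icc (0 : ℝ) T ×ˢ X)ᶜ) = 0 := by
    rw [Measure.map_apply hπ hK'.measurableSet.compl]
    refine measure_mono_null ?_ hμ
    intro z hz hz2
    exact hz ⟨hz2.1, hz2.2.1⟩
  let ρp : Fin m → ℝ × (Fin n → ℝ) × (Fin m → ℝ) → ℝ := fun j z => max (z.2.2 j) 0
  let ρm : Fin m → ℝ × (Fin n → ℝ) × (Fin m → ℝ) → ℝ := fun j z => max (-z.2.2 j) 0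
  let ρh : Fin m → ℝ × (Fin n → ℝ) × (Fin m → ℝ) → ℝ := fun j z => max (1 - |z.2.2 j|) 0
  have cp : ∀ j, Continuous (ρp j) := fun j => by fun_prop
  have cm : ∀ j, Continuous (ρm j) := fun j => by fun_prop
  have ch : ∀ j, Continuous (ρh j) := fun j => by fun_prop
  refine ⟨μ.map π, fun j => S (ρp j), fun j => S (ρm j), fun j => S (ρh j),
    inferInstance, inferInstance, inferInstance,
    fun j => ⟨hSfin _ (cp j), hSfin _ (cm j), hSfin _ (ch j)⟩, hμ, hμT, hγsupp,
    fun j => ⟨hSsupp _, hSsupp _, hSsupp _⟩, hL, ?_, ?_, rfl⟩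
  · intro v hv
    have hLg := fun j => aux_cont_Lg (X := X) hg hv j
    have hLf := aux_cont_Lf (X := X) hf hv
    have hgi : ∀ j, ∀ ρ : ℝ × (Fin n → ℝ) × (Fin m → ℝ) → ℝ, Continuous ρ →
        Integrable (fun z => ρ z * Lgop g v j (π z)) μ := fun j ρ hρ =>
      aux_integrable hK hμ (hρ.continuousOn.mul (aux_cont_proj (hLg j)))
    rw [integral_map hπ.aemeasurable (aux_integrable hK' hγsupp hLf).aestronglyMeasurable]
    have : ∀ j, ∫ z, Lgop g v j z ∂(S (ρp j)) - ∫ z, Lgop g v j z ∂(S (ρm j)) =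
        ∫ z, Lgop g v j (π z) * z.2.2 j ∂μ := by
      intro j
      rw [hSint _ (cp j) (fun z => le_max_right _ _) _ (hLg j),
        hSint _ (cm j) (fun z => le_max_right _ _) _ (hLg j),
        ← integral_sub (hgi j _ (cp j)) (hgi j _ (cm j))]
      refine integral_congr_ae (ae_of_all _ fun z => ?_)
      have : max (z.2.2 j) 0 - max (-z.2.2 j) 0 = z.2.2 j := max_zero_sub_eq_self _
      change max (z.2.2 j) 0 * _ - max (-z.2.2 j) 0 * _ = _
      rw [← sub_mul, this, mul_comm]
    simp only [this]
    have hgi2 : ∀ j, Integrable (fun z => Lgop g v j (π z) * z.2.2 j) μ := fun j =>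
      aux_integrable hK hμ ((aux_cont_proj (hLg j)).mul (by fun_prop))
    rw [← integral_finsetSum _ (fun j _ => hgi2 j), ← integral_add
      (aux_integrable hK hμ (aux_cont_proj hLf)) (integrable_finsetSum _ (fun j _ => hgi2 j))]
    exact integral_congr_ae (ae_of_all _ fun z => aux_LF_eq v z)
  · intro j
    have mp := (cp j).measurable
    have mm := (cm j).measurable
    have mh := (ch j).measurable
    change (μ.withDensity _).map π + (μ.withDensity _).map π + (μ.withDensity _).map π = _
    rw [← Measure.map_add _ _ hπ, ← Measure.map_add _ _ hπ,
      ← withDensity_add_left (by fun_prop), ← withDensity_add_left (by fun_prop)]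
    congr 1
    conv_rhs => rw [← withDensity_one (μ := μ)]
    refine withDensity_congr_ae ?_
    filter_upwards [hmem] with z hz
    have hu : |z.2.2 j| ≤ 1 := abs_le.mpr ⟨hz.2.2.1 j, hz.2.2.2 j⟩
    change ENNReal.ofReal (max (z.2.2 j) 0) + ENNReal.ofReal (max (-z.2.2 j) 0) +
      ENNReal.ofReal (max (1 - |z.2.2 j|) 0) = 1
    rw [← ENNReal.ofReal_add (le_max_right _ _) (le_max_right _ _),
      ← ENNReal.ofReal_add (by positivity) (le_max_right _ _), max_eq_left (sub_nonneg.mpr hu)]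
    have : max (z.2.2 j) 0 + max (-z.2.2 j) 0 = |z.2.2 j| := by
      rcases le_total 0 (z.2.2 j) with h | h
      · simp [h, abs_of_nonneg h]
      · simp [h, abs_of_nonpos h]
    rw [this]; simp

end ops

/-- The space of `C¹` functions. -/
def auxC1 (n : ℕ) : Submodule ℝ (ℝ × (Fin n → ℝ) → ℝ) where
  carrier := {v | ContDiff ℝ 1 v}
  add_mem' := by
    intro a b ha hb
    rw [mem_ofPred_eq] at *
    exact ha.add hb
  zero_mem' := by
    rw [mem_ofPred_eq]
    exact contDiff_const
  smul_mem' := by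
    intro c a ha
    rw [mem_ofPred_eq] at *
    exact contDiff_const.smul ha

lemma auxC1_contDiff {n : ℕ} (v : auxC1 n) : ContDiff ℝ 1 v.1 := v.2

/-- strong duality between `(P)` and `(D)`: if `(P)` is feasible, then the
infimum of `(P)` equals the supremum of `(D)`. -/
theorem strong_duality
    {n m : ℕ} (hn : 0 < n) (hm : 0 < m) (T : ℝ) (hT : 0 < T)
    (X XT : Set (Fin n → ℝ)) (hX : IsCompact X) (hXT : IsCompact XT) (hXTsub : XT ⊆ X)
    (x₀ : Fin n → ℝ) (hx₀ : x₀ ∈ X)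
    (f : ℝ × (Fin n → ℝ) → Fin n → ℝ) (g : ℝ × (Fin n → ℝ) → Fin n → Fin m → ℝ)
    (hf : ContinuousOn f (Set.Icc (0 : ℝ) T ×ˢ Set.univ))
    (hg : ContinuousOn g (Set.Icc (0 : ℝ) T ×ˢ Set.univ))
    (h : ℝ × (Fin n → ℝ) × (Fin m → ℝ) → ℝ) (H : (Fin n → ℝ) → ℝ)
    (hh : Continuous h) (hH : Continuous H)
    (hPfeas : ∃ (μ : Measure (ℝ × (Fin n → ℝ) × (Fin m → ℝ))) (μT : Measure (Fin n → ℝ))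
      (γ : Measure (ℝ × (Fin n → ℝ))) (σp σm σh : Fin m → Measure (ℝ × (Fin n → ℝ))),
      PFeasible T X XT x₀ f g μ μT γ σp σm σh) :
    sInf {c : ℝ | ∃ (μ : Measure (ℝ × (Fin n → ℝ) × (Fin m → ℝ))) (μT : Measure (Fin n → ℝ))
        (γ : Measure (ℝ × (Fin n → ℝ))) (σp σm σh : Fin m → Measure (ℝ × (Fin n → ℝ))),
        PFeasible T X XT x₀ f g μ μT γ σp σm σh ∧ c = ∫ z, h z ∂μ + ∫ y, H y ∂μT} =
      sSup {d : ℝ | ∃ (v w : ℝ × (Fin n → ℝ) → ℝ) (p : Fin m → ℝ × (Fin n → ℝ) → ℝ)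
        (q : ℝ × (Fin n → ℝ) → ℝ),
        DFeasible T X XT f g h H v w p q ∧ d = v (0, x₀)} := by
  set SP := {c : ℝ | ∃ (μ : Measure (ℝ × (Fin n → ℝ) × (Fin m → ℝ))) (μT : Measure (Fin n → ℝ))
        (γ : Measure (ℝ × (Fin n → ℝ))) (σp σm σh : Fin m → Measure (ℝ × (Fin n → ℝ))),
        PFeasible T X XT x₀ f g μ μT γ σp σm σh ∧ c = ∫ z, h z ∂μ + ∫ y, H y ∂μT} with hSP
  set SD := {d : ℝ | ∃ (v w : ℝ × (Fin n → ℝ) → ℝ) (p : Fin m → ℝ × (Fin n → ℝ) → ℝ)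
        (q : ℝ × (Fin n → ℝ) → ℝ),
        DFeasible T X XT f g h H v w p q ∧ d = v (0, x₀)} with hSD
  have hK : IsCompact (Set.Icc (0 : ℝ) T ×ˢ X ×ˢ Ubox m) :=
    isCompact_Icc.prod (hX.prod isCompact_Icc)
  have weak : ∀ c ∈ SP, ∀ d ∈ SD, d ≤ c := by
    rintro c ⟨μ, μT, γ, σp, σm, σh, ⟨i1, i2, -, -, h1, h2, -, -, hL, -⟩, rfl⟩ d
      ⟨v, w, p, q, hD, rfl⟩
    have := aux_weak hf hg hX hXT hh hH h1 h2 hL hD.1 1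
      (fun z hz => by simpa using aux_D_reduce hD z hz)
      (fun x hx => by simpa using hD.2.2.2.2.2.1 x hx)
    simpa using this
  have redD : ∀ v : ℝ × (Fin n → ℝ) → ℝ, ContDiff ℝ 1 v →
      (∀ z ∈ Set.Icc (0 : ℝ) T ×ˢ X ×ˢ Ubox m, 0 ≤ LFop f g v z + h z) →
      (∀ x ∈ XT, v (T, x) ≤ H x) → v (0, x₀) ∈ SD := by
    intro v hv h1 h2
    refine ⟨v, fun _ => 0, fun _ _ => 0, fun _ => 0, ⟨hv, contDiff_const, fun _ => continuous_const,
      continuous_const, ?_, h2, ?_, ?_, ?_⟩, rfl⟩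
    · intro z hz
      simpa [LFop] using h1 z hz
    · intro z hz; simp [Lfop]
    · intro j z hz; simp [Lgop]
    · intro j z hz; simp
  obtain ⟨μ₀, μT₀, γ₀, σp₀, σm₀, σh₀, hP₀⟩ := hPfeas
  have hc₀ : ∫ z, h z ∂μ₀ + ∫ y, H y ∂μT₀ ∈ SP := ⟨μ₀, μT₀, γ₀, σp₀, σm₀, σh₀, hP₀, rfl⟩
  have hbdd : BddAbove SD := ⟨_, fun d hd => weak _ hc₀ d hd⟩
  have hne : SD.Nonempty := by
    obtain ⟨r, hr⟩ := (hK.image hh).bddBelow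
    obtain ⟨s, hs⟩ := (hXT.image hH).bddBelow
    refine ⟨_, redD (fun y => (-r) * y.1 + (s + r * T)) (by fun_prop) ?_ ?_⟩
    · intro z hz
      rw [aux_LF_affine]
      have := hr (mem_image_of_mem h hz)
      linarith
    · intro x hx
      have := hs (mem_image_of_mem H hx)
      simp only
      linarith
  have : CompactSpace (Set.Icc (0 : ℝ) T ×ˢ X ×ˢ Ubox m : Set (ℝ × (Fin n → ℝ) × (Fin m → ℝ))) :=
    isCompact_iff_compactSpace.mp hK
  have : CompactSpace XT := isCompact_iff_compactSpace.mp hXT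
  let A : auxC1 n × ℝ →ₗ[ℝ] C((Set.Icc (0 : ℝ) T ×ˢ X ×ˢ Ubox m :
      Set (ℝ × (Fin n → ℝ) × (Fin m → ℝ))), ℝ) :=
    { toFun := fun e => ⟨Set.domRestrict _ (fun z => LFop f g e.1.1 z + e.2 * h z),
        ((aux_cont_LF hf hg (auxC1_contDiff e.1)).add (by fun_prop)).domRestrict⟩
      map_add' := fun a b => by
        ext z
        change LFop f g (a.1.1 + b.1.1) z.1 + (a.2 + b.2) * h z.1 =
          (LFop f g a.1.1 z.1 + a.2 * h z.1) + (LFop f g b.1.1 z.1 + b.2 * h z.1)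
        rw [aux_LF_add (auxC1_contDiff a.1) (auxC1_contDiff b.1)]; ring
      map_smul' := fun c a => by
        ext z
        change LFop f g (c • a.1.1) z.1 + (c * a.2) * h z.1 =
          c * (LFop f g a.1.1 z.1 + a.2 * h z.1)
        rw [aux_LF_smul (auxC1_contDiff a.1)]; ring }
  have hcv : ∀ v : auxC1 n, Continuous v.1 := fun v => (auxC1_contDiff v).continuous
  let B : auxC1 n × ℝ →ₗ[ℝ] C(XT, ℝ) :=
    { toFun := fun e => ⟨Set.domRestrict _ (fun x => e.2 * H x - e.1.1 (T, x)),
        (ContinuousOn.domRestrict (by have := hcv e.1; fun_prop))⟩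
      map_add' := fun a b => by
        ext z
        change (a.2 + b.2) * H z.1 - (a.1.1 (T, z.1) + b.1.1 (T, z.1)) =
          (a.2 * H z.1 - a.1.1 (T, z.1)) + (b.2 * H z.1 - b.1.1 (T, z.1))
        ring
      map_smul' := fun c a => by
        ext z
        change (c * a.2) * H z.1 - c * a.1.1 (T, z.1) = c * (a.2 * H z.1 - a.1.1 (T, z.1))
        ring }
  let l : auxC1 n × ℝ →ₗ[ℝ] ℝ :=
    { toFun := fun e => e.2 * sSup SD - e.1.1 (0, x₀)
      map_add' := fun a b => by
        change (a.2 + b.2) * sSup SD - (a.1.1 (0, x₀) + b.1.1 (0, x₀)) = _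
        ring
      map_smul' := fun c a => by
        change (c * a.2) * sSup SD - c * a.1.1 (0, x₀) = c * (a.2 * sSup SD - a.1.1 (0, x₀))
        ring }
  have hdle : sSup SD ≤ ∫ z, h z ∂μ₀ + ∫ y, H y ∂μT₀ := csSup_le hne (weak _ hc₀)
  obtain ⟨Λ₁, Λ₂, hΛ₁, hΛ₂, hΛ⟩ := aux_duality A B l (by
      rintro ⟨⟨v, hv⟩, c⟩ h1 h2
      have h1' : ∀ z ∈ Set.Icc (0 : ℝ) T ×ˢ X ×ˢ Ubox m, 0 ≤ LFop f g v z + c * h z :=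
        fun z hz => h1 ⟨z, hz⟩
      have h2' : ∀ x ∈ XT, 0 ≤ c * H x - v (T, x) := fun x hx => h2 ⟨x, hx⟩
      change 0 ≤ c * sSup SD - v (0, x₀)
      have hv' : ContDiff ℝ 1 v := hv
      rcases le_or_gt c 0 with hc | hc
      · obtain ⟨i1, i2, -, -, e1, e2, -, -, hL, -⟩ := hP₀
        have := aux_weak hf hg hX hXT hh hH e1 e2 hL hv' c h1' h2'
        have := mul_le_mul_of_nonpos_left hdle hc
        linarith
      · have hmem : (c⁻¹ • v) (0, x₀) ∈ SD := by
          refine redD (c⁻¹ • v) (contDiff_const.smul hv') ?_ ?_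
          · intro z hz
            rw [aux_LF_smul hv']
            have := mul_nonneg (inv_nonneg.mpr hc.le) (h1' z hz)
            rwa [mul_add, inv_mul_cancel_left₀ hc.ne'] at this
          · intro x hx
            have := mul_nonneg (inv_nonneg.mpr hc.le) (h2' x hx)
            rw [mul_sub, inv_mul_cancel_left₀ hc.ne'] at this
            change c⁻¹ * v (T, x) ≤ H x
            linarith
        have := mul_le_mul_of_nonneg_left (le_csSup hbdd hmem) hc.le
        change c * (c⁻¹ * v (0, x₀)) ≤ _ at this
        rw [mul_inv_cancel_left₀ hc.ne'] at this
        linarith) (by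
      intro r
      refine ⟨(⟨fun y => r * y.1 + (-r - r * T), ?_⟩, 0), ?_, ?_⟩
      · change ContDiff ℝ 1 _
        fun_prop
      · intro z
        change r ≤ LFop f g _ z.1 + 0 * h z.1
        rw [aux_LF_affine]; simp
      · intro x
        change r ≤ 0 * H x.1 - (r * T + (-r - r * T))
        linarith)
  obtain ⟨μ, i1, hμ, hμi⟩ := aux_riesz _ hK Λ₁ hΛ₁
  obtain ⟨μT, i2, hμT, hμTi⟩ := aux_riesz _ hXT Λ₂ hΛ₂
  have key : ∀ (v : ℝ × (Fin n → ℝ) → ℝ), ContDiff ℝ 1 v → ∀ c : ℝ,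
      ∫ z, (LFop f g v z + c * h z) ∂μ + ∫ x, (c * H x - v (T, x)) ∂μT =
        c * sSup SD - v (0, x₀) := by
    intro v hv c
    have hvc := hv.continuous
    rw [hμi (fun z => LFop f g v z + c * h z) ((aux_cont_LF hf hg hv).add (by fun_prop)),
      hμTi (fun x => c * H x - v (T, x)) (by fun_prop)]
    exact hΛ (⟨v, hv⟩, c)
  have hL : SatisfiesLiouville T x₀ f g μ μT := by
    intro v hv
    have := key v hv 0
    simp only [zero_mul, add_zero, zero_sub, integral_neg] at this
    linarith
  have hobj : sSup SD = ∫ z, h z ∂μ + ∫ y, H y ∂μT := by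
    have := key (fun y => 0 * y.1 + 0) (by fun_prop) 1
    simp only [aux_LF_affine] at this
    simp at this
    exact this.symm
  obtain ⟨γ, σp, σm, σh, hP⟩ := aux_complete hf hg hX (XT := XT) hμ hμT hL
  have hleast : IsLeast SP (sSup SD) :=
    ⟨⟨μ, μT, γ, σp, σm, σh, hP, hobj⟩, fun c hc => csSup_le hne (weak c hc)⟩
  exact hleast.csInf_eq

end
end
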